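/- Suppose there are constants $\alpha, \beta > 0$, $\gamma \in (0,1)$, $A, B \ge 0$, $M > 0$, Borel functions $\theta, \psi : [0, \infty) \to [0, \infty)$, and a function $\varepsilon \mapsto r_{\varepsilon}$ from $(0,\infty)$ to $(0,1)$ with $r_{\varepsilon} \to 0$ as $\varepsilon \to 0^+$, satisfying: (i) $\theta$ is nondecreasing, $\theta(r) \le A\varepsilon r^{\alpha}$ for every $\varepsilon > 0$ and every $r \in [0, r_{\varepsilon}^{1-\gamma}]$, and $\theta(r) \le B r^{\beta}$ for all $r \ge M$; (ii) $\int_0^{\infty} r^{\alpha}\psi(r)\, dr < \infty$, $R^{\alpha/\gamma} \int_R^{\infty} \psi(r)\, dr \to 0$ as $R \to \infty$, and $R^{\alpha - \beta}\int_R^{\infty} r^{\beta}\psi(r)\, dr \to 0$ as $R \to \infty$. Then $$r_{\varepsilon}^{-(\alpha+1)} \int_0^{\infty} \psi(r / r_{\varepsilon})\, \theta(r)\, dr \longrightarrow 0 \quad \text{as } \varepsilon \to 0^+.$$ -/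

import Mathlib

open MeasureTheory Filter

/-!
Split `(0, ∞)` at `r_ε^{1-γ}` and at `M`. On the three pieces `θ(s)` is at most `A ε s^α`, `θ(M)`
and `B s^β` respectively, and substituting `s = r_ε u` bounds the three contributions by
`A ε ∫_0^∞ u^α ψ`, by `θ(M) R^{α/γ} ∫_R^∞ ψ` with `R = r_ε^{-γ}`, and by a constant times
`R^{α-β} ∫_R^∞ u^β ψ` with `R = M / r_ε`. All three tend to `0`.
-/

open Set
open scoped ENNReal Topology

lemma setLIntegral_preimage_div {ρ : ℝ} (hρ : ρ ≠ 0) (f : ℝ → ℝ≥0∞) (T : Set ℝ) :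
    ∫⁻ s in (· / ρ) ⁻¹' T, f (s / ρ) = ENNReal.ofReal |ρ| * ∫⁻ u in T, f u := by
  have hemb : MeasurableEmbedding (· * ρ⁻¹) := measurableEmbedding_mulRight₀ (inv_ne_zero hρ)
  simp only [div_eq_mul_inv]
  rw [← hemb.lintegral_map, ← hemb.restrict_map, Real.map_volume_mul_right (inv_ne_zero hρ),
    inv_inv, setLIntegral_smul_measure, smul_eq_mul]

lemma setLIntegral_Ioi_le_add_add {X : Type*} [LinearOrder X] [MeasurableSpace X]
    (μ : Measure X) (f : X → ℝ≥0∞) (a b c : X) :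
    ∫⁻ x in Ioi a, f x ∂μ ≤
      ∫⁻ x in Ioc a b, f x ∂μ + ∫⁻ x in Ioc b c, f x ∂μ + ∫⁻ x in Ioi c, f x ∂μ := by
  have hcover : Ioi a ⊆ Ioc a b ∪ Ioc b c ∪ Ioi c :=
    Ioi_subset_Ioc_union_Ioi.trans <|
      (union_subset_union_right _ Ioi_subset_Ioc_union_Ioi).trans (union_assoc _ _ _).superset
  calc ∫⁻ x in Ioi a, f x ∂μ
      ≤ ∫⁻ x in Ioc a b ∪ Ioc b c ∪ Ioi c, f x ∂μ := lintegral_mono_set hcover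
    _ ≤ ∫⁻ x in Ioc a b ∪ Ioc b c, f x ∂μ + ∫⁻ x in Ioi c, f x ∂μ := lintegral_union_le _ _ _
    _ ≤ _ := by gcongr; exact lintegral_union_le _ _ _

section Rescaling

variable {θ ψ : ℝ → ℝ} {ρ : ℝ}

lemma rpow_mul_comp_div_mul_le {α k p s : ℝ} (hρ : 0 < ρ) (hs : 0 < s) (hψ : 0 ≤ ψ (s / ρ))
    (hθ : θ s ≤ k * s ^ p) :
    ρ ^ (-(α + 1)) * (ψ (s / ρ) * θ s) ≤
      k * ρ ^ (p - α) * ρ⁻¹ * ((s / ρ) ^ p * ψ (s / ρ)) := by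
  have hexp : ρ ^ (-(α + 1)) * ρ ^ p = ρ ^ (p - α) * ρ⁻¹ := by
    rw [← Real.rpow_neg_one, ← Real.rpow_add hρ, ← Real.rpow_add hρ]
    ring_nf
  have hpow : s ^ p = ρ ^ p * (s / ρ) ^ p := by
    rw [← Real.mul_rpow hρ.le (by positivity), mul_div_cancel₀ s hρ.ne']
  calc ρ ^ (-(α + 1)) * (ψ (s / ρ) * θ s)
      ≤ ρ ^ (-(α + 1)) * (ψ (s / ρ) * (k * s ^ p)) := by gcongr
    _ = k * (ρ ^ (-(α + 1)) * ρ ^ p) * ((s / ρ) ^ p * ψ (s / ρ)) := by rw [hpow]; ring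
    _ = k * ρ ^ (p - α) * ρ⁻¹ * ((s / ρ) ^ p * ψ (s / ρ)) := by rw [hexp]; ring

lemma rpow_mul_setLIntegral_comp_div_le {α k p : ℝ} {S T : Set ℝ} (hρ : 0 < ρ)
    (hψ : ∀ u, 0 < u → 0 ≤ ψ u) (hS : MeasurableSet S) (hS0 : S ⊆ Ioi 0)
    (hST : MapsTo (· / ρ) S T) (hθ : ∀ s ∈ S, θ s ≤ k * s ^ p) :
    ENNReal.ofReal (ρ ^ (-(α + 1))) * ∫⁻ s in S, ENNReal.ofReal (ψ (s / ρ) * θ s) ≤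
      ENNReal.ofReal (k * ρ ^ (p - α)) * ∫⁻ u in T, ENNReal.ofReal (u ^ p * ψ u) := by
  set K : ℝ≥0∞ := ENNReal.ofReal (k * ρ ^ (p - α) * ρ⁻¹)
  have hpointwise : ∀ s ∈ S,
      ENNReal.ofReal (ρ ^ (-(α + 1))) * ENNReal.ofReal (ψ (s / ρ) * θ s) ≤
        K * ENNReal.ofReal ((s / ρ) ^ p * ψ (s / ρ)) := fun s hs => by
    have hsρ : 0 < s / ρ := div_pos (hS0 hs) hρ
    rw [← ENNReal.ofReal_mul (by positivity),
      ← ENNReal.ofReal_mul' (mul_nonneg (by positivity) (hψ _ hsρ))]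
    exact ENNReal.ofReal_le_ofReal
      (rpow_mul_comp_div_mul_le hρ (hS0 hs) (hψ _ hsρ) (hθ s hs))
  calc ENNReal.ofReal (ρ ^ (-(α + 1))) * ∫⁻ s in S, ENNReal.ofReal (ψ (s / ρ) * θ s)
      = ∫⁻ s in S, ENNReal.ofReal (ρ ^ (-(α + 1))) * ENNReal.ofReal (ψ (s / ρ) * θ s) :=
        (lintegral_const_mul' _ _ ENNReal.ofReal_ne_top).symm
    _ ≤ ∫⁻ s in S, K * ENNReal.ofReal ((s / ρ) ^ p * ψ (s / ρ)) :=
        setLIntegral_mono' hS hpointwise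
    _ = K * ∫⁻ s in S, ENNReal.ofReal ((s / ρ) ^ p * ψ (s / ρ)) :=
        lintegral_const_mul' _ _ ENNReal.ofReal_ne_top
    _ ≤ K * ∫⁻ s in (· / ρ) ⁻¹' T, ENNReal.ofReal ((s / ρ) ^ p * ψ (s / ρ)) := by
        gcongr; exact hST
    _ = K * ENNReal.ofReal ρ * ∫⁻ u in T, ENNReal.ofReal (u ^ p * ψ u) := by
        rw [setLIntegral_preimage_div hρ.ne' fun u => ENNReal.ofReal (u ^ p * ψ u),
          abs_of_pos hρ, mul_assoc]
    _ = ENNReal.ofReal (k * ρ ^ (p - α)) * ∫⁻ u in T, ENNReal.ofReal (u ^ p * ψ u) := by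
        rw [← ENNReal.ofReal_mul' hρ.le, inv_mul_cancel_right₀ hρ.ne']

lemma rpow_mul_setLIntegral_Ioi_comp_div_le {α β c C B a b : ℝ} (hρ : 0 < ρ)
    (hψ : ∀ u, 0 < u → 0 ≤ ψ u) (ha : 0 ≤ a) (hb : 0 ≤ b)
    (hθsmall : ∀ s ∈ Ioc 0 a, θ s ≤ c * s ^ α) (hθmid : ∀ s ∈ Ioc a b, θ s ≤ C)
    (hθlarge : ∀ s ∈ Ioi b, θ s ≤ B * s ^ β) :
    ENNReal.ofReal (ρ ^ (-(α + 1))) * ∫⁻ s in Ioi 0, ENNReal.ofReal (ψ (s / ρ) * θ s) ≤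
      (ENNReal.ofReal c * ∫⁻ u in Ioi 0, ENNReal.ofReal (u ^ α * ψ u)) +
      (ENNReal.ofReal (C * ρ ^ (-α)) * ∫⁻ u in Ioi (a / ρ), ENNReal.ofReal (ψ u)) +
      ENNReal.ofReal (B * ρ ^ (β - α)) *
        ∫⁻ u in Ioi (b / ρ), ENNReal.ofReal (u ^ β * ψ u) := by
  have hdiv (x : ℝ) : MapsTo (· / ρ) (Ioi x) (Ioi (x / ρ)) := fun s hs =>
    div_lt_div_of_pos_right hs hρ
  have hsmall := rpow_mul_setLIntegral_comp_div_le (α := α) hρ hψ measurableSet_Ioc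
    Ioc_subset_Ioi_self ((hdiv 0).mono_left Ioc_subset_Ioi_self) hθsmall
  have hmid := rpow_mul_setLIntegral_comp_div_le (α := α) (k := C) (p := 0) hρ hψ
    measurableSet_Ioc (Ioc_subset_Ioi_self.trans (Ioi_subset_Ioi ha))
    ((hdiv a).mono_left Ioc_subset_Ioi_self) (by simpa using hθmid)
  have hlarge := rpow_mul_setLIntegral_comp_div_le (α := α) hρ hψ measurableSet_Ioi
    (Ioi_subset_Ioi hb) (hdiv b) hθlarge
  simp only [sub_self, Real.rpow_zero, mul_one, zero_div] at hsmall
  simp only [zero_sub, Real.rpow_zero, one_mul] at hmid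
  refine (mul_le_mul_right (setLIntegral_Ioi_le_add_add volume _ 0 a b) _).trans ?_
  rw [mul_add, mul_add]
  exact add_le_add (add_le_add hsmall hmid) hlarge

end Rescaling

lemma tendsto_ofReal_rpow_mul_comp_nhdsGT_zero {F : ℝ → ℝ≥0∞} {c δ q : ℝ} (hc : 0 < c)
    (hδ : 0 < δ)
    (hF : Tendsto (fun R => ENNReal.ofReal (R ^ q) * F R) atTop (𝓝 0)) :
    Tendsto (fun ρ => ENNReal.ofReal (ρ ^ (-(δ * q))) * F (c * ρ ^ (-δ))) (𝓝[>] 0) (𝓝 0) := by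
  have hR : Tendsto (fun ρ : ℝ => c * ρ ^ (-δ)) (𝓝[>] 0) atTop :=
    (tendsto_rpow_neg_nhdsGT_zero (neg_lt_zero.2 hδ)).const_mul_atTop hc
  have hlim := ENNReal.Tendsto.const_mul (a := ENNReal.ofReal (c ^ (-q))) (hF.comp hR)
    (Or.inr ENNReal.ofReal_ne_top)
  rw [mul_zero] at hlim
  refine hlim.congr' ?_
  filter_upwards [self_mem_nhdsWithin] with ρ (hρ : 0 < ρ)
  have hpow : c ^ (-q) * (c * ρ ^ (-δ)) ^ q = ρ ^ (-(δ * q)) := by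
    rw [Real.mul_rpow hc.le (by positivity), ← mul_assoc, ← Real.rpow_add hc, neg_add_cancel,
      Real.rpow_zero, one_mul, ← Real.rpow_mul hρ.le, neg_mul]
  rw [Function.comp_apply, ← mul_assoc, ← ENNReal.ofReal_mul (by positivity), hpow]

theorem stmt11_general {ι : Type*} {l : Filter ι} {α β γ B C M : ℝ} {θ ψ : ℝ → ℝ}
    {r c : ι → ℝ} (hγ : 0 < γ) (hM : 0 < M) (hψnn : ∀ s, 0 < s → 0 ≤ ψ s)
    (hr : Tendsto r l (𝓝[>] 0)) (hc : Tendsto c l (𝓝 0))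
    (hθsmall : ∀ᶠ i in l, ∀ s ∈ Ioc 0 (r i ^ (1 - γ)), θ s ≤ c i * s ^ α)
    (hθbdd : ∀ s ∈ Ioc 0 M, θ s ≤ C) (hθlarge : ∀ s, M < s → θ s ≤ B * s ^ β)
    (hψ1 : ∫⁻ s in Ioi 0, ENNReal.ofReal (s ^ α * ψ s) < ⊤)
    (hψ2 : Tendsto (fun R : ℝ =>
        ENNReal.ofReal (R ^ (α / γ)) * ∫⁻ s in Ioi R, ENNReal.ofReal (ψ s)) atTop (𝓝 0))
    (hψ3 : Tendsto (fun R : ℝ =>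
        ENNReal.ofReal (R ^ (α - β)) * ∫⁻ s in Ioi R, ENNReal.ofReal (s ^ β * ψ s))
      atTop (𝓝 0)) :
    Tendsto (fun i => ENNReal.ofReal (r i ^ (-(α + 1))) *
      ∫⁻ s in Ioi 0, ENNReal.ofReal (ψ (s / r i) * θ s)) l (𝓝 0) := by
  have hsmall := ENNReal.Tendsto.mul_const (ENNReal.tendsto_ofReal hc) (Or.inr hψ1.ne)
  have hmid := ENNReal.Tendsto.const_mul (a := ENNReal.ofReal C)
    ((tendsto_ofReal_rpow_mul_comp_nhdsGT_zero one_pos hγ hψ2).comp hr)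
    (Or.inr ENNReal.ofReal_ne_top)
  have hlarge := ENNReal.Tendsto.const_mul (a := ENNReal.ofReal B)
    ((tendsto_ofReal_rpow_mul_comp_nhdsGT_zero hM one_pos hψ3).comp hr)
    (Or.inr ENNReal.ofReal_ne_top)
  have hsum := (hsmall.add hmid).add hlarge
  simp only [ENNReal.ofReal_zero, zero_mul, mul_zero, add_zero] at hsum
  refine tendsto_of_tendsto_of_tendsto_of_le_of_le' tendsto_const_nhds hsum
    (Eventually.of_forall fun _ => zero_le) ?_
  filter_upwards [hθsmall, hr self_mem_nhdsWithin] with i hi (hri : 0 < r i)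
  refine (rpow_mul_setLIntegral_Ioi_comp_div_le hri hψnn (by positivity) hM.le hi
    (fun s hs => hθbdd s ⟨(by positivity : 0 < r i ^ (1 - γ)).trans hs.1, hs.2⟩)
    hθlarge).trans_eq ?_
  have hthreshold : r i ^ (1 - γ) / r i = r i ^ (-γ) := by
    rw [← Real.rpow_sub_one hri.ne', sub_sub_cancel_left]
  simp only [Function.comp_apply, hthreshold, mul_div_cancel₀ α hγ.ne', one_mul, neg_sub,
    Real.rpow_neg_one, ← div_eq_mul_inv, ENNReal.ofReal_mul' (Real.rpow_nonneg hri.le _),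
    mul_assoc]

/-- Under conditions (i) on the nondecreasing Borel function `θ`
(small near `0` relative to `r_ε^{1-γ}`, polynomially bounded at infinity) and (ii) on the
Borel function `ψ` (integrability of `r^α ψ(r)` and decay of the tails
`R^{α/γ} ∫_R^∞ ψ` and `R^{α-β} ∫_R^∞ r^β ψ`), one has
`r_ε^{-(α+1)} ∫₀^∞ ψ(r/r_ε) θ(r) dr → 0` as `ε → 0⁺`. Integrals of nonnegative functions
are taken in `[0,∞]`. -/
theorem stmt11 (α β γ A B M : ℝ) (hα : 0 < α) (hβ : 0 < β)
    (hγ : γ ∈ Set.Ioo (0 : ℝ) 1) (hA : 0 ≤ A) (hB : 0 ≤ B) (hM : 0 < M)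
    (θ ψ : ℝ → ℝ) (hθmeas : Measurable θ) (hψmeas : Measurable ψ)
    (hθnn : ∀ r : ℝ, 0 ≤ r → 0 ≤ θ r) (hψnn : ∀ r : ℝ, 0 ≤ r → 0 ≤ ψ r)
    (r : ℝ → ℝ) (hr : ∀ ε : ℝ, 0 < ε → r ε ∈ Set.Ioo (0 : ℝ) 1)
    (hrlim : Tendsto r (nhdsWithin 0 (Set.Ioi 0)) (nhds 0))
    (hθmono : MonotoneOn θ (Set.Ici 0))
    (hθsmall : ∀ ε : ℝ, 0 < ε → ∀ s ∈ Set.Icc (0 : ℝ) (r ε ^ (1 - γ)),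
      θ s ≤ A * ε * s ^ α)
    (hθlarge : ∀ s : ℝ, M ≤ s → θ s ≤ B * s ^ β)
    (hψ1 : ∫⁻ s in Set.Ioi (0 : ℝ), ENNReal.ofReal (s ^ α * ψ s) < ⊤)
    (hψ2 : Tendsto (fun R : ℝ =>
        ENNReal.ofReal (R ^ (α / γ)) * ∫⁻ s in Set.Ioi R, ENNReal.ofReal (ψ s))
      atTop (nhds 0))
    (hψ3 : Tendsto (fun R : ℝ =>
        ENNReal.ofReal (R ^ (α - β)) * ∫⁻ s in Set.Ioi R, ENNReal.ofReal (s ^ β * ψ s))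
      atTop (nhds 0)) :
    Tendsto (fun ε : ℝ =>
        ENNReal.ofReal (r ε ^ (-(α + 1))) *
          ∫⁻ s in Set.Ioi (0 : ℝ), ENNReal.ofReal (ψ (s / r ε) * θ s))
      (nhdsWithin 0 (Set.Ioi 0)) (nhds 0) := by
  have hr0 : Tendsto r (𝓝[>] 0) (𝓝[>] 0) := tendsto_nhdsWithin_iff.2
    ⟨hrlim, eventually_mem_nhdsWithin.mono fun ε hε => (hr ε hε).1⟩
  have hAε : Tendsto (fun ε => A * ε) (𝓝[>] 0) (𝓝 0) :=
    (Continuous.tendsto' (by fun_prop) 0 0 (mul_zero A)).mono_left nhdsWithin_le_nhds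
  exact stmt11_general hγ.1 hM (fun s hs => hψnn s hs.le) hr0 hAε
    (eventually_mem_nhdsWithin.mono fun ε hε s hs => hθsmall ε hε s ⟨hs.1.le, hs.2⟩)
    (fun s hs => hθmono hs.1.le hM.le hs.2) (fun s hs => hθlarge s hs.le) hψ1 hψ2 hψ3
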